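/- S^H_χ is a free A-module with basis {x₁, x₂x₃, x₁³, x₁x₂², x₂³x₃, x₁³x₂²}: every χ-relative H-invariant f ∈ S can be written uniquely as f = p₁(a₁,a₂,a₃)·x₁ + p₂(a₁,a₂,a₃)·x₂x₃ + p₃(a₁,a₂,a₃)·x₁³ + p₄(a₁,a₂,a₃)·x₁x₂² + p₅(a₁,a₂,a₃)·x₂³x₃ + p₆(a₁,a₂,a₃)·x₁³x₂² with p₁,…,p₆ ∈ 𝔽₃[T₁,T₂,T₃], and conversely every element of this form is a χ-relative H-invariant. -/

import Mathlib

open Matrix MvPolynomial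

set_option synthInstance.maxHeartbeats 1000000
set_option maxHeartbeats 1000000

abbrev F3 : Type := ZMod 3
abbrev G3 : Type := Matrix.SpecialLinearGroup (Fin 2) F3
abbrev S3 : Type := MvPolynomial (Fin 3) F3

/-- The fixed basis `v₁, v₂, v₃` of the traceless `2 × 2` matrices over `𝔽₃`. -/
def V : Fin 3 → Matrix (Fin 2) (Fin 2) F3 :=
  ![!![0, 1; -1, 0], !![-1, -1; -1, 1], !![1, -1; -1, -1]]

/-- Coordinates of a traceless matrix with respect to the basis `v₁, v₂, v₃`. -/
def coordM : Fin 3 → Matrix (Fin 2) (Fin 2) F3 → F3 :=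
  ![fun X => X 1 0 - X 0 1, fun X => X 0 0 - X 0 1 - X 1 0, fun X => -(X 0 0 + X 0 1 + X 1 0)]

/-- Matrix of the (dual) action of `g` on `M*`: `g • x_s = ∑ r, (rep g) s r • x_r`, where
`(rep g) s r = x_s (g⁻¹ • v_r) = coordM s (g⁻¹ vᵣ g)`, coming from `(g • f)(v) = f(g⁻¹ • v)`. -/
def rep (g : G3) : Matrix (Fin 3) (Fin 3) F3 :=
  Matrix.of fun s r => coordM s ((g⁻¹ : G3) * V r * (g : Matrix (Fin 2) (Fin 2) F3))

/-- The action of `g ∈ SL₂(𝔽₃)` on `S = 𝔽₃[x₁,x₂,x₃]` by algebra automorphisms, given by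
substituting `x_s ↦ g • x_s = ∑ r, (rep g) s r • x_r`. -/
noncomputable def actS (g : G3) : S3 →ₐ[F3] S3 :=
  MvPolynomial.aeval fun s => ∑ r : Fin 3, rep g s r • MvPolynomial.X r

noncomputable def a1 : S3 := X 0 ^ 2 + X 1 ^ 2 + X 2 ^ 2
noncomputable def a2 : S3 := X 0 * X 1 * X 2
noncomputable def a3 : S3 := X 0 ^ 4 + X 1 ^ 4 + X 2 ^ 4
noncomputable def bP : S3 := X 0 ^ 4 * X 1 ^ 2 + X 0 ^ 2 * X 2 ^ 4 + X 1 ^ 4 * X 2 ^ 2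
noncomputable def av : Fin 3 → S3 := ![a1, a2, a3]

def tm : G3 := ⟨!![1, 1; 0, 1], by decide⟩
def im : G3 := ⟨!![0, 1; -1, 0], by decide⟩
def jm : G3 := ⟨!![1, -1; -1, -1], by decide⟩

/-- The quaternion subgroup `H = ⟨i, j⟩ ≅ Q₈` of `SL₂(𝔽₃)`. -/
def H3 : Subgroup G3 := Subgroup.closure {im, jm}

/-- The character with `χ(±e) = χ(±i) = 1` and `χ(±j) = χ(±k) = -1` (its values off the
set `{±e, ±i}` are `-1`; only the restriction to `H` is ever used). -/
def chi (g : G3) : F3 :=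
  if (g : Matrix (Fin 2) (Fin 2) F3) = 1 ∨ (g : Matrix (Fin 2) (Fin 2) F3) = -1 ∨
     (g : Matrix (Fin 2) (Fin 2) F3) = (im : Matrix (Fin 2) (Fin 2) F3) ∨
     (g : Matrix (Fin 2) (Fin 2) F3) = -(im : Matrix (Fin 2) (Fin 2) F3) then 1 else -1

/-- The `𝔽₃`-submodule `S^H_χ` of `χ`-relative `H`-invariants in `S`. -/
noncomputable def relInv : Submodule F3 S3 where
  carrier := {f | ∀ h ∈ H3, actS h f = chi h • f}
  add_mem' := by
    intro f g hf hg h hh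
    rw [map_add, hf h hh, hg h hh, smul_add]
  zero_mem' := by
    intro h hh
    rw [map_zero, smul_zero]
  smul_mem' := by
    intro c f hf h hh
    rw [_root_.map_smul, hf h hh, smul_comm]

/-- The six module generators `x₁, x₂x₃, x₁³, x₁x₂², x₂³x₃, x₁³x₂²`. -/
noncomputable def w7 : Fin 6 → S3 :=
  ![X 0, X 1 * X 2, X 0 ^ 3, X 0 * X 1 ^ 2, X 1 ^ 3 * X 2, X 0 ^ 3 * X 1 ^ 2]

/-- `Ψ(p₁,…,p₆) = ∑ᵢ pᵢ(a₁,a₂,a₃) · wᵢ`. -/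
noncomputable def Psi7 (p : Fin 6 → MvPolynomial (Fin 3) F3) : S3 :=
  ∑ i : Fin 6, aeval av (p i) * w7 i

/-!
The group `H` acts on the coordinates by even sign changes, so its characters grade the polynomial
ring by `(ℤ/2)²`, and `χ` is the character of `x₁`: the relative invariants are the component of
weight `(1, 0)`. Its monomials are `x₁` or `x₂x₃` times a monomial in the squares `xᵢ²`.

The squares are the roots of a cubic whose coefficients `e₁`, `e₂`, `e₃ = a₂²` in the squares lie
in `A`, because `a₁ = e₁` and, in characteristic three, `a₃ = e₁² + e₂`. Hence multiplication by
`x₁²` preserves the `A`-span of `x₁, x₂x₃, x₁³`, and `x₂²` is quadratic over `A[x₁²]`, so the span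
of the six elements is stable under all squares and is the whole component.

For independence, permuting the variables fixes `A`. Permuted copies of a relation between
`1, x₁², x₁⁴` form a Vandermonde system, so there is none, and the half `x₁, x₂x₃, x₁³` of the basis
is independent. The transposition of the last two variables fixes this half but moves `x₂²`, so the
two halves are independent of each other. Finally `a₁, a₂, a₃` are algebraically independent because
the polynomial ring is integral over `A`.
-/

section LinearIndependence

variable {R : Type*} [CommRing R]

theorem linearIndependent_sumElim_mul {ι A D : Type*} [CommRing A] [CommRing D] [NoZeroDivisors D]
    [Algebra A D] (φ : D →ₐ[A] D) {b : ι → D} {y : D} (hb : LinearIndependent A b)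
    (hφb : ∀ i, φ (b i) = b i) (hφy : φ y ≠ y) :
    LinearIndependent A (Sum.elim b fun i => y * b i) := by
  have hy : y ≠ 0 := by
    rintro rfl
    exact hφy (map_zero φ)
  have fixed : ∀ q ∈ Submodule.span A (Set.range b), φ q = q := fun q hq =>
    LinearMap.eqOn_span (f := φ.toLinearMap) (g := LinearMap.id)
      (by rintro _ ⟨i, rfl⟩; exact hφb i) hq
  have hyb : LinearIndependent A fun i => y * b i :=
    hb.map_injOn (LinearMap.mulLeft A y) (mul_right_injective₀ hy).injOn
  refine hb.sum_type hyb (Submodule.disjoint_def.mpr fun z hz hyz => ?_)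
  have span_eq : Submodule.span A (Set.range fun i => y * b i) =
      (Submodule.span A (Set.range b)).map (LinearMap.mulLeft A y) := by
    rw [Submodule.map_span, ← Set.range_comp]
    rfl
  rw [span_eq] at hyz
  obtain ⟨q, hq, rfl⟩ := hyz
  have moved : (φ y - y) * q = 0 := by
    have := fixed _ hz
    rw [LinearMap.mulLeft_apply, map_mul, fixed q hq] at this
    rw [sub_mul, this, sub_self]
  rw [(mul_eq_zero.mp moved).resolve_left (sub_ne_zero.mpr hφy), map_zero]

/-- Permutation of the variables, as an endomorphism over a subalgebra of symmetric polynomials. -/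
noncomputable def renameOver {σ : Type*} {A : Subalgebra R (MvPolynomial σ R)}
    (hA : A ≤ symmetricSubalgebra σ R) (e : Equiv.Perm σ) :
    MvPolynomial σ R →ₐ[A] MvPolynomial σ R :=
  { (rename e : MvPolynomial σ R →ₐ[R] MvPolynomial σ R) with commutes' := fun a => hA a.2 e }

theorem renameOver_apply {σ : Type*} {A : Subalgebra R (MvPolynomial σ R)}
    (hA : A ≤ symmetricSubalgebra σ R) (e : Equiv.Perm σ) (f : MvPolynomial σ R) :
    renameOver hA e f = rename e f := rfl

theorem X_pow_injective {σ : Type*} [Nontrivial R] {m : ℕ} (hm : m ≠ 0) :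
    Function.Injective fun i : σ => (X i ^ m : MvPolynomial σ R) := by
  intro i j h
  simp only [X_pow_eq_monomial] at h
  exact (Finsupp.single_left_inj hm).mp (monomial_left_injective one_ne_zero h)

theorem linearIndependent_X_pow_pow [IsDomain R] {n : ℕ}
    {A : Subalgebra R (MvPolynomial (Fin n) R)} (hA : A ≤ symmetricSubalgebra (Fin n) R)
    (i : Fin n) {m : ℕ} (hm : m ≠ 0) :
    LinearIndependent A fun k : Fin n => (X i ^ m : MvPolynomial (Fin n) R) ^ (k : ℕ) := by
  refine Fintype.linearIndependent_iff.mpr fun g hg => ?_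
  have root : ∀ j, ∑ k : Fin n, (X j ^ m) ^ (k : ℕ) * (g k : MvPolynomial (Fin n) R) = 0 := by
    intro j
    have moved := congrArg (renameOver hA (Equiv.swap i j)) hg
    simp only [map_sum, map_smul, map_pow, renameOver_apply, rename_X, Equiv.swap_apply_left,
      map_zero] at moved
    simpa only [Subalgebra.smul_def, smul_eq_mul, mul_comm] using moved
  have := Matrix.eq_zero_of_forall_index_sum_pow_mul_eq_zero (X_pow_injective hm) root
  exact fun k => Subtype.ext (congrFun this k)

end LinearIndependence

section AlgebraicIndependence

variable {R σ : Type*} [CommRing R]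

theorem isIntegral_of_forall_isIntegral_X (A : Subalgebra R (MvPolynomial σ R))
    (hX : ∀ i, IsIntegral A (X i : MvPolynomial σ R)) :
    Algebra.IsIntegral A (MvPolynomial σ R) := by
  have le : Algebra.adjoin R (Set.range X) ≤
      (integralClosure A (MvPolynomial σ R)).restrictScalars R :=
    Algebra.adjoin_le (by rintro _ ⟨i, rfl⟩; exact hX i)
  rw [adjoin_range_X] at le
  exact ⟨fun f => le (x := f) trivial⟩

theorem algebraicIndependent_of_isAlgebraic_adjoin [Finite σ] [IsDomain R]
    {a : σ → MvPolynomial σ R}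
    [Algebra.IsAlgebraic (Algebra.adjoin R (Set.range a)) (MvPolynomial σ R)] :
    AlgebraicIndependent R a := by
  refine (Algebra.IsAlgebraic.isTranscendenceBasis_of_lift_le_trdeg_of_finite R a ?_).1
  rw [trdeg_of_isDomain, Cardinal.lift_lift]

end AlgebraicIndependence

section Multiplier

variable {A D : Type*} [CommRing A] [CommRing D] [Algebra A D]

/-- The subalgebra of the elements of `D` that map the submodule `N` into itself. It collects the
factors that may be split off a polynomial when showing that it lies in a span. -/
def multiplier (N : Submodule A D) : Subalgebra A D where
  carrier := {y | ∀ f ∈ N, y * f ∈ N}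
  mul_mem' hy hz f hf := by
    rw [mul_assoc]
    exact hy _ (hz f hf)
  add_mem' hy hz f hf := by
    rw [add_mul]
    exact N.add_mem (hy f hf) (hz f hf)
  algebraMap_mem' a f hf := by
    rw [← Algebra.smul_def]
    exact N.smul_mem a hf

theorem mem_multiplier_span {s : Set D} {y : D} (h : ∀ f ∈ s, y * f ∈ Submodule.span A s) :
    y ∈ multiplier (Submodule.span A s) :=
  fun _ hf =>
    (Submodule.map_span_le (LinearMap.mulLeft A y) s _).mpr h (Submodule.mem_map_of_mem hf)

variable {ι : Type*} {b : ι → D}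

theorem mul_mem_span_sumElim_mul (y : D) {f : D} (hf : f ∈ Submodule.span A (Set.range b)) :
    y * f ∈ Submodule.span A (Set.range (Sum.elim b fun i => y * b i)) := by
  refine (Submodule.map_span_le (LinearMap.mulLeft A y) (Set.range b) _).mpr ?_
    (Submodule.mem_map_of_mem hf)
  rintro _ ⟨i, rfl⟩
  exact Submodule.subset_span ⟨Sum.inr i, rfl⟩

theorem span_le_span_sumElim (c : ι → D) :
    Submodule.span A (Set.range b) ≤ Submodule.span A (Set.range (Sum.elim b c)) :=
  Submodule.span_mono (Set.range_subset_iff.mpr fun i => ⟨Sum.inl i, rfl⟩)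

theorem multiplier_span_le_multiplier_span_sumElim_mul (y : D) :
    multiplier (Submodule.span A (Set.range b)) ≤
      multiplier (Submodule.span A (Set.range (Sum.elim b fun i => y * b i))) := by
  refine fun x hx => mem_multiplier_span ?_
  rintro _ ⟨i | i, rfl⟩
  · exact span_le_span_sumElim _ (hx _ (Submodule.subset_span ⟨i, rfl⟩))
  · rw [Sum.elim_inr, mul_left_comm]
    exact mul_mem_span_sumElim_mul y (hx _ (Submodule.subset_span ⟨i, rfl⟩))

theorem mem_multiplier_span_sumElim_mul {y α β : D}
    (hα : α ∈ multiplier (Submodule.span A (Set.range b)))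
    (hβ : β ∈ multiplier (Submodule.span A (Set.range b))) (hy : y ^ 2 = α * y + β) :
    y ∈ multiplier (Submodule.span A (Set.range (Sum.elim b fun i => y * b i))) := by
  refine mem_multiplier_span ?_
  rintro _ ⟨i | i, rfl⟩
  · exact Submodule.subset_span ⟨Sum.inr i, rfl⟩
  · have hyy : y * (y * b i) = α * (y * b i) + β * b i := by
      linear_combination b i * hy
    have stable := multiplier_span_le_multiplier_span_sumElim_mul (A := A) (b := b) y
    rw [Sum.elim_inr, hyy]
    exact add_mem (stable hα _ (Submodule.subset_span ⟨Sum.inr i, rfl⟩))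
      (stable hβ _ (Submodule.subset_span ⟨Sum.inl i, rfl⟩))

end Multiplier

section Diagonal

variable {R σ M : Type*} [CommRing R] [AddCommMonoid M]

theorem aeval_addChar_smul_X_monomial (ψ : AddChar M R) (w : σ → M) (d : σ →₀ ℕ) (c : R) :
    aeval (fun s => ψ (w s) • (X s : MvPolynomial σ R)) (monomial d c) =
      monomial d (ψ (Finsupp.weight w d) * c) := by
  have hψ : ψ (Finsupp.weight w d) = d.prod fun s k => ψ (w s) ^ k := by
    simp only [Finsupp.prod, ← AddChar.map_nsmul_eq_pow]
    exact map_prod ψ.toMonoidHom (fun s => Multiplicative.ofAdd (d s • w s)) d.support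
  rw [aeval_monomial, monomial_eq, hψ]
  simp only [algebraMap_eq, C_mul, Finsupp.prod, map_prod, C_pow, smul_eq_C_mul, mul_pow,
    Finset.prod_mul_distrib]
  ring

theorem coeff_aeval_addChar_smul_X (ψ : AddChar M R) (w : σ → M) (f : MvPolynomial σ R)
    (d : σ →₀ ℕ) :
    coeff d (aeval (fun s => ψ (w s) • (X s : MvPolynomial σ R)) f) =
      ψ (Finsupp.weight w d) * coeff d f := by
  classical
  induction f using MvPolynomial.induction_on' with
  | monomial e c =>
    rw [aeval_addChar_smul_X_monomial, coeff_monomial, coeff_monomial]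
    split_ifs with h
    · rw [h]
    · rw [mul_zero]
  | add p q hp hq => rw [map_add, coeff_add, coeff_add, hp, hq, mul_add]

theorem aeval_addChar_smul_X_eq_smul_iff [NoZeroDivisors R] (ψ : AddChar M R) (w : σ → M) (m : M)
    (f : MvPolynomial σ R) :
    aeval (fun s => ψ (w s) • (X s : MvPolynomial σ R)) f = ψ m • f ↔
      ∀ d ∈ f.support, ψ (Finsupp.weight w d) = ψ m := by
  simp only [MvPolynomial.ext_iff, coeff_aeval_addChar_smul_X, coeff_smul, smul_eq_mul,
    mem_support_iff]
  refine forall_congr' fun d => ⟨fun h hd => ?_, fun h => ?_⟩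
  · exact mul_right_cancel₀ hd h
  · by_cases hd : coeff d f = 0
    · rw [hd, mul_zero, mul_zero]
    · rw [h hd]

end Diagonal

section Tetrahedral

variable (R : Type*) [CommRing R]

/-- The basic invariants of the full tetrahedral group, the group of permutations and even sign
changes of three coordinates. In place of the power sum `a3` the last one is an elementary symmetric
polynomial in the squares, so that the squares are roots of a monic cubic over any ring. -/
noncomputable def tetrahedralInvariant : Fin 3 → MvPolynomial (Fin 3) R :=
  ![X 0 ^ 2 + X 1 ^ 2 + X 2 ^ 2, X 0 * X 1 * X 2,
    X 0 ^ 2 * X 1 ^ 2 + X 0 ^ 2 * X 2 ^ 2 + X 1 ^ 2 * X 2 ^ 2]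

/-- The subalgebra generated by `tetrahedralInvariant`; over `F3` it is the ring `A` generated by
`a1`, `a2`, `a3`. -/
noncomputable def tetrahedralSubalgebra : Subalgebra R (MvPolynomial (Fin 3) R) :=
  Algebra.adjoin R (Set.range (tetrahedralInvariant R))

variable {R}

theorem tetrahedralInvariant_mem (i : Fin 3) :
    tetrahedralInvariant R i ∈ tetrahedralSubalgebra R :=
  Algebra.subset_adjoin ⟨i, rfl⟩

theorem esymm_fin_three_two :
    esymm (Fin 3) R 2 = X 0 * X 1 + X 0 * X 2 + X 1 * X 2 := by
  have : (Finset.univ : Finset (Fin 3)).powersetCard 2 = {{0, 1}, {0, 2}, {1, 2}} := by decide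
  rw [esymm, this, Finset.sum_insert (by decide), Finset.sum_insert (by decide),
    Finset.sum_singleton, Finset.prod_pair (by decide), Finset.prod_pair (by decide),
    Finset.prod_pair (by decide), add_assoc]

theorem tetrahedralInvariant_isSymmetric (i : Fin 3) : (tetrahedralInvariant R i).IsSymmetric := by
  fin_cases i
  · simpa [tetrahedralInvariant, psum, Fin.sum_univ_three] using psum_isSymmetric (Fin 3) R 2
  · intro e
    simpa [tetrahedralInvariant, Fin.prod_univ_three] using
      Equiv.prod_comp e fun i => (X i : MvPolynomial (Fin 3) R)
  · intro e
    have h := esymm_isSymmetric (Fin 3) R 2 e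
    rw [esymm_fin_three_two] at h
    simpa [rename_expand, tetrahedralInvariant, mul_pow] using congrArg (expand 2) h

theorem tetrahedralSubalgebra_le_symmetricSubalgebra :
    tetrahedralSubalgebra R ≤ symmetricSubalgebra (Fin 3) R :=
  Algebra.adjoin_le (by rintro _ ⟨i, rfl⟩; exact tetrahedralInvariant_isSymmetric i)

theorem X_pow_six_eq (i : Fin 3) :
    (X i ^ 6 : MvPolynomial (Fin 3) R) = tetrahedralInvariant R 0 * X i ^ 4 -
      tetrahedralInvariant R 2 * X i ^ 2 + tetrahedralInvariant R 1 ^ 2 := by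
  match i with
  | 0 | 1 | 2 =>
    simp only [tetrahedralInvariant, Matrix.cons_val]
    ring

theorem isIntegral_X (i : Fin 3) :
    IsIntegral (tetrahedralSubalgebra R) (X i : MvPolynomial (Fin 3) R) := by
  let c (j : Fin 3) : tetrahedralSubalgebra R := ⟨_, tetrahedralInvariant_mem j⟩
  refine ⟨Polynomial.X ^ 6 - Polynomial.C (c 0) * Polynomial.X ^ 4 +
    Polynomial.C (c 2) * Polynomial.X ^ 2 - Polynomial.C (c 1 ^ 2), by monicity!, ?_⟩
  have hc (j : Fin 3) : algebraMap (tetrahedralSubalgebra R) (MvPolynomial (Fin 3) R) (c j) =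
      tetrahedralInvariant R j := rfl
  simp only [Polynomial.eval₂_add, Polynomial.eval₂_sub, Polynomial.eval₂_mul,
    Polynomial.eval₂_pow, Polynomial.eval₂_X, Polynomial.eval₂_C, map_pow, hc]
  linear_combination X_pow_six_eq (R := R) i

instance : Algebra.IsIntegral (tetrahedralSubalgebra R) (MvPolynomial (Fin 3) R) :=
  isIntegral_of_forall_isIntegral_X _ isIntegral_X

variable (R) in
/-- The half `x₁, x₂x₃, x₁³` of the basis `w7`, over an arbitrary coefficient ring; it spans a
submodule stable under multiplication by `x₁²`. -/
noncomputable def cubicBasis : Fin 3 → MvPolynomial (Fin 3) R :=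
  ![X 0, X 1 * X 2, X 0 ^ 3]

variable (R) in
/-- The basis `w7` over an arbitrary coefficient ring. The index type records that the second half
is `x₂²` times the first. -/
noncomputable def relInvBasis : Fin 3 ⊕ Fin 3 → MvPolynomial (Fin 3) R :=
  Sum.elim (cubicBasis R) fun i => X 1 ^ 2 * cubicBasis R i

theorem linearIndependent_cubicBasis [IsDomain R] :
    LinearIndependent (tetrahedralSubalgebra R) (cubicBasis R) := by
  let c₁ : tetrahedralSubalgebra R := ⟨_, tetrahedralInvariant_mem 1⟩
  have hpow := Fintype.linearIndependent_iff.mp <| linearIndependent_X_pow_pow (R := R)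
    tetrahedralSubalgebra_le_symmetricSubalgebra 0 two_ne_zero
  refine Fintype.linearIndependent_iff.mpr fun g hg => ?_
  -- Multiplication by `X 0` turns the family into `X 0 ^ 2`, a nonzero scalar and `X 0 ^ 4`.
  have scaled : ∀ k, ![g 1 * c₁, g 0, g 2] k = 0 := hpow _ <| by
    simp only [Fin.sum_univ_three, cubicBasis, Subalgebra.smul_def, Matrix.cons_val,
      smul_eq_mul, Fin.val_zero, Fin.val_one, Fin.val_two, MulMemClass.coe_mul, c₁,
      tetrahedralInvariant] at hg ⊢
    linear_combination X 0 * hg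
  have hc₁ : c₁ ≠ 0 := by
    simp [c₁, tetrahedralInvariant, Subtype.ext_iff]
  have h₁ : g 1 = 0 := (mul_eq_zero.mp (scaled 0)).resolve_right hc₁
  exact fun i => by fin_cases i; exacts [scaled 1, h₁, scaled 2]

theorem linearIndependent_relInvBasis [IsDomain R] :
    LinearIndependent (tetrahedralSubalgebra R) (relInvBasis R) := by
  have fixes := tetrahedralSubalgebra_le_symmetricSubalgebra (R := R)
  refine linearIndependent_sumElim_mul (renameOver fixes (Equiv.swap 1 2))
    linearIndependent_cubicBasis (fun i => ?_) ?_
  · fin_cases i <;> simp [renameOver_apply, cubicBasis, mul_comm, Equiv.swap_apply_of_ne_of_ne]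
  · rw [map_pow, renameOver_apply, rename_X, Equiv.swap_apply_left]
    exact (X_pow_injective two_ne_zero).ne (by decide)

theorem X_zero_sq_mem_multiplier : X 0 ^ 2 ∈
    multiplier (Submodule.span (tetrahedralSubalgebra R) (Set.range (cubicBasis R))) := by
  let c (j : Fin 3) : tetrahedralSubalgebra R := ⟨_, tetrahedralInvariant_mem j⟩
  refine mem_multiplier_span ?_
  rintro _ ⟨i, rfl⟩
  let coeffs : Fin 3 → Fin 3 → tetrahedralSubalgebra R :=
    ![![0, 0, 1], ![c 1, 0, 0], ![-c 2, c 1, c 0]]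
  refine Submodule.mem_span_range_iff_exists_fun _ |>.mpr ⟨coeffs i, ?_⟩
  match i with
  | 0 | 1 | 2 =>
    simp only [Fin.sum_univ_three, coeffs, c, cubicBasis, tetrahedralInvariant, Matrix.cons_val,
      Subalgebra.smul_def, smul_eq_mul, ZeroMemClass.coe_zero, OneMemClass.coe_one,
      NegMemClass.coe_neg]
    ring

theorem X_sq_mem_multiplier (i : Fin 3) : X i ^ 2 ∈
    multiplier (Submodule.span (tetrahedralSubalgebra R) (Set.range (relInvBasis R))) := by
  have hc {N : Submodule (tetrahedralSubalgebra R) (MvPolynomial (Fin 3) R)} (j : Fin 3) :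
      tetrahedralInvariant R j ∈ multiplier N :=
    (multiplier N).algebraMap_mem ⟨_, tetrahedralInvariant_mem j⟩
  have h₀ := X_zero_sq_mem_multiplier (R := R)
  have h₁ : X 1 ^ 2 ∈
      multiplier (Submodule.span (tetrahedralSubalgebra R) (Set.range (relInvBasis R))) :=
    mem_multiplier_span_sumElim_mul (α := tetrahedralInvariant R 0 - X 0 ^ 2)
      (β := tetrahedralInvariant R 0 * X 0 ^ 2 - tetrahedralInvariant R 2 - (X 0 ^ 2) ^ 2)
      (sub_mem (hc 0) h₀) (sub_mem (sub_mem (mul_mem (hc 0) h₀) (hc 2)) (pow_mem h₀ 2)) <| by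
      simp only [tetrahedralInvariant, Matrix.cons_val]
      ring
  replace h₀ := multiplier_span_le_multiplier_span_sumElim_mul (X 1 ^ 2) h₀
  have h₂ : (X 2 ^ 2 : MvPolynomial (Fin 3) R) =
      tetrahedralInvariant R 0 - X 0 ^ 2 - X 1 ^ 2 := by
    simp only [tetrahedralInvariant, Matrix.cons_val]
    ring
  fin_cases i
  exacts [h₀, h₁, h₂ ▸ sub_mem (sub_mem (hc 0) h₀) h₁]

end Tetrahedral

section Grading

variable {R : Type*} [CommRing R]

/-- The weights that grade the polynomials in three variables by the characters of the group of
even sign changes of the coordinates. The character group is `(ℤ/2)²`, and each coordinate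
transforms by one of its three nonzero elements. -/
def signWeight : Fin 3 → ZMod 2 × ZMod 2 :=
  ![(1, 0), (0, 1), (1, 1)]

theorem isWeightedHomogeneous_X_sq (i : Fin 3) :
    IsWeightedHomogeneous signWeight (X i ^ 2 : MvPolynomial (Fin 3) R) 0 := by
  have := (isWeightedHomogeneous_X R signWeight i).pow 2
  rwa [CharTwo.two_nsmul] at this

theorem isWeightedHomogeneous_X_one_mul_X_two :
    IsWeightedHomogeneous signWeight (X 1 * X 2 : MvPolynomial (Fin 3) R) (1, 0) :=
  (isWeightedHomogeneous_X R signWeight 1).mul (isWeightedHomogeneous_X R signWeight 2)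

theorem isWeightedHomogeneous_tetrahedralInvariant (i : Fin 3) :
    IsWeightedHomogeneous signWeight (tetrahedralInvariant R i) 0 := by
  have sq := isWeightedHomogeneous_X_sq (R := R)
  fin_cases i
  · exact ((sq 0).add (sq 1)).add (sq 2)
  · have X_deg := isWeightedHomogeneous_X R signWeight
    exact ((X_deg 0).mul (X_deg 1)).mul (X_deg 2)
  · exact (((sq 0).mul (sq 1)).add ((sq 0).mul (sq 2))).add ((sq 1).mul (sq 2))

theorem isWeightedHomogeneous_of_mem_tetrahedralSubalgebra {f : MvPolynomial (Fin 3) R}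
    (hf : f ∈ tetrahedralSubalgebra R) : IsWeightedHomogeneous signWeight f 0 := by
  have := WeightedHomogeneousSubmodule.gradedMonoid (R := R) (w := signWeight)
  refine (Algebra.adjoin_le (S := SetLike.GradeZero.subalgebra
    (weightedHomogeneousSubmodule R signWeight)) ?_) hf
  rintro _ ⟨i, rfl⟩
  exact isWeightedHomogeneous_tetrahedralInvariant i

theorem isWeightedHomogeneous_cubicBasis (i : Fin 3) :
    IsWeightedHomogeneous signWeight (cubicBasis R i) (1, 0) := by
  fin_cases i
  · exact isWeightedHomogeneous_X R signWeight 0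
  · exact isWeightedHomogeneous_X_one_mul_X_two
  · exact (isWeightedHomogeneous_X R signWeight 0).pow 3

theorem isWeightedHomogeneous_relInvBasis (i : Fin 3 ⊕ Fin 3) :
    IsWeightedHomogeneous signWeight (relInvBasis R i) (1, 0) := by
  rcases i with i | i
  · exact isWeightedHomogeneous_cubicBasis i
  · exact (isWeightedHomogeneous_X_sq 1).mul (isWeightedHomogeneous_cubicBasis i)

theorem monomial_two_nsmul_mem_multiplier (e : Fin 3 →₀ ℕ) (c : R) : monomial (2 • e) c ∈
    multiplier (Submodule.span (tetrahedralSubalgebra R) (Set.range (relInvBasis R))) := by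
  rw [← expand_monomial, monomial_eq, map_mul, Finsupp.prod, map_prod, expand_C]
  refine mul_mem ?_ (prod_mem fun i _ => ?_)
  · exact (multiplier _).algebraMap_mem (algebraMap R (tetrahedralSubalgebra R) c)
  · rw [map_pow, expand_X]
    exact pow_mem (X_sq_mem_multiplier i) _

theorem exists_monomial_eq_mul_of_weight_signWeight {d : Fin 3 →₀ ℕ} (c : R)
    (hd : Finsupp.weight signWeight d = (1, 0)) :
    ∃ e : Fin 3 →₀ ℕ, monomial d c = monomial (2 • e) c * X 0 ∨
      monomial d c = monomial (2 • e) c * (X 1 * X 2) := by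
  have parity : (d 0 : ZMod 2) + d 2 = 1 ∧ (d 1 : ZMod 2) + d 2 = 0 := by
    simpa [Finsupp.weight_apply, Finsupp.sum_fintype, Fin.sum_univ_three, signWeight,
      Prod.ext_iff] using hd
  simp only [← Nat.cast_add, ZMod.natCast_eq_one_iff_odd, ZMod.natCast_eq_zero_iff_even,
    Nat.odd_iff, Nat.even_iff] at parity
  refine ⟨d.mapRange (· / 2) (Nat.zero_div 2), ?_⟩
  simp only [X, monomial_mul, mul_one]
  refine (Nat.mod_two_eq_zero_or_one (d 2)).imp (fun h₂ => ?_) (fun h₂ => ?_)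
  all_goals
    refine congrArg (monomial · c) (Finsupp.ext fun i => ?_)
    match i with
    | 0 | 1 | 2 =>
      simp only [Finsupp.add_apply, Finsupp.smul_apply, Finsupp.mapRange_apply,
        Finsupp.single_apply, smul_eq_mul, Fin.reduceEq, zero_ne_one, one_ne_zero, if_true,
        if_false]
      omega

theorem mem_span_relInvBasis_iff {f : MvPolynomial (Fin 3) R} :
    f ∈ Submodule.span (tetrahedralSubalgebra R) (Set.range (relInvBasis R)) ↔
      IsWeightedHomogeneous signWeight f (1, 0) := by
  constructor
  · intro hf
    induction hf using Submodule.span_induction with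
    | mem f hf =>
      obtain ⟨i, rfl⟩ := hf
      exact isWeightedHomogeneous_relInvBasis i
    | zero => exact isWeightedHomogeneous_zero R signWeight _
    | add f g _ _ hf hg => exact hf.add hg
    | smul a f _ hf =>
      exact (isWeightedHomogeneous_of_mem_tetrahedralSubalgebra a.2).mul hf
  · intro hf
    rw [f.as_sum]
    refine sum_mem fun d hd => ?_
    obtain ⟨e, h | h⟩ := exists_monomial_eq_mul_of_weight_signWeight (coeff d f)
      (hf (mem_support_iff.mp hd))
    all_goals rw [h]
    · exact monomial_two_nsmul_mem_multiplier e _ _ (Submodule.subset_span ⟨Sum.inl 0, rfl⟩)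
    · exact monomial_two_nsmul_mem_multiplier e _ _ (Submodule.subset_span ⟨Sum.inl 1, rfl⟩)

end Grading

section QuaternionGroup

/-- The characters of `ZMod 2 × ZMod 2` with values in `F3`; the `c`-th one is
`x ↦ (-1) ^ (c.1 * x.1 + c.2 * x.2)`. -/
def signChar (c : ZMod 2 × ZMod 2) : AddChar (ZMod 2 × ZMod 2) F3 :=
  (AddChar.zmodChar 2 (ζ := (-1 : F3)) (by decide)).compAddMonoidHom
    ((AddMonoidHom.mulLeft c.1).coprod (AddMonoidHom.mulLeft c.2))

/-- The elements `±e, ±i, ±j, ±k` of `H3`. -/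
def quaternionElements : Finset G3 :=
  {1, -1, im, -im, jm, -jm, im * jm, -(im * jm)}

theorem H3_subset_quaternionElements : (H3 : Set G3) ⊆ quaternionElements := by
  intro h hh
  induction hh using Subgroup.closure_induction_left with
  | one => decide
  | mul_left x hx y _ hy =>
    have closed : ∀ x ∈ ({im, jm} : Finset G3), ∀ y ∈ quaternionElements,
      x * y ∈ quaternionElements := by decide
    exact closed x (by simpa using hx) y hy
  | inv_mul_cancel x hx y _ hy =>
    have closed : ∀ x ∈ ({im, jm} : Finset G3), ∀ y ∈ quaternionElements,
      x⁻¹ * y ∈ quaternionElements := by decide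
    exact closed x (by simpa using hx) y hy

/-- The group element `g` scales each coordinate by the value of the `c`-th sign character at its
weight, and `χ` takes at `g` the value at the weight of `x₁`. -/
def ActsBySignChar (g : G3) (c : ZMod 2 × ZMod 2) : Prop :=
  rep g = Matrix.diagonal (fun s => signChar c (signWeight s)) ∧ chi g = signChar c (1, 0)

instance (g : G3) (c : ZMod 2 × ZMod 2) : Decidable (ActsBySignChar g c) :=
  inferInstanceAs (Decidable (_ ∧ _))

theorem actS_eq_chi_smul_iff {g : G3} {c : ZMod 2 × ZMod 2} (hg : ActsBySignChar g c) (f : S3) :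
    actS g f = chi g • f ↔
      ∀ d ∈ f.support, signChar c (Finsupp.weight signWeight d) = signChar c (1, 0) := by
  have diag : actS g = aeval fun s => signChar c (signWeight s) • (X s : S3) := by
    refine congrArg aeval (funext fun s => ?_)
    simp only [hg.1, Matrix.diagonal_apply, ite_smul, zero_smul, Finset.sum_ite_eq,
      Finset.mem_univ, if_true]
  rw [diag, hg.2, aeval_addChar_smul_X_eq_smul_iff]

theorem actsBySignChar_im : ActsBySignChar im (0, 1) := by decide

theorem actsBySignChar_jm : ActsBySignChar jm (1, 1) := by decide

theorem exists_actsBySignChar {h : G3} (hh : h ∈ H3) : ∃ c, ActsBySignChar h c := by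
  have elements := H3_subset_quaternionElements hh
  simp only [quaternionElements, Finset.coe_insert, Finset.coe_singleton, Set.mem_insert_iff,
    Set.mem_singleton_iff] at elements
  rcases elements with rfl | rfl | rfl | rfl | rfl | rfl | rfl | rfl
  exacts [⟨(0, 0), by decide⟩, ⟨(0, 0), by decide⟩, ⟨(0, 1), actsBySignChar_im⟩,
    ⟨(0, 1), by decide⟩, ⟨(1, 1), actsBySignChar_jm⟩, ⟨(1, 1), by decide⟩,
    ⟨(1, 0), by decide⟩, ⟨(1, 0), by decide⟩]

theorem mem_relInv_iff {f : S3} : f ∈ relInv ↔ IsWeightedHomogeneous signWeight f (1, 0) := by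
  constructor
  · intro hf d hd
    have him := (actS_eq_chi_smul_iff actsBySignChar_im f).mp
      (hf im (Subgroup.subset_closure (.inl rfl))) d (mem_support_iff.mpr hd)
    have hjm := (actS_eq_chi_smul_iff actsBySignChar_jm f).mp
      (hf jm (Subgroup.subset_closure (.inr rfl))) d (mem_support_iff.mpr hd)
    have separate : ∀ m, signChar (0, 1) m = signChar (0, 1) (1, 0) →
      signChar (1, 1) m = signChar (1, 1) (1, 0) → m = (1, 0) := by decide
    exact separate _ him hjm
  · intro hf h hh
    obtain ⟨c, hc⟩ := exists_actsBySignChar hh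
    exact (actS_eq_chi_smul_iff hc f).mpr fun d hd => by rw [hf (mem_support_iff.mp hd)]

end QuaternionGroup

section Basis

theorem adjoin_range_av : Algebra.adjoin F3 (Set.range av) = tetrahedralSubalgebra F3 := by
  have h3 : (3 : S3) = 0 := CharP.cast_eq_zero S3 3
  have av_zero : av 0 = tetrahedralInvariant F3 0 := by
    simp only [av, a1, tetrahedralInvariant, Matrix.cons_val]
  have av_one : av 1 = tetrahedralInvariant F3 1 := by
    simp only [av, a2, tetrahedralInvariant, Matrix.cons_val]
  have av_two : av 2 = tetrahedralInvariant F3 0 ^ 2 + tetrahedralInvariant F3 2 := by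
    simp only [av, a3, tetrahedralInvariant, Matrix.cons_val]
    linear_combination -(X 0 ^ 2 * X 1 ^ 2 + X 0 ^ 2 * X 2 ^ 2 + X 1 ^ 2 * X 2 ^ 2) * h3
  refine le_antisymm (Algebra.adjoin_le ?_) (Algebra.adjoin_le ?_)
  · rintro _ ⟨i, rfl⟩
    match i with
    | 0 => exact av_zero ▸ tetrahedralInvariant_mem 0
    | 1 => exact av_one ▸ tetrahedralInvariant_mem 1
    | 2 =>
      rw [av_two]
      exact add_mem (pow_mem (tetrahedralInvariant_mem 0) 2) (tetrahedralInvariant_mem 2)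
  · have av_mem (i : Fin 3) : av i ∈ Algebra.adjoin F3 (Set.range av) :=
      Algebra.subset_adjoin ⟨i, rfl⟩
    rintro _ ⟨i, rfl⟩
    match i with
    | 0 => exact av_zero ▸ av_mem 0
    | 1 => exact av_one ▸ av_mem 1
    | 2 =>
      rw [eq_sub_of_add_eq' av_two.symm, ← av_zero]
      exact sub_mem (av_mem 2) (pow_mem (av_mem 0) 2)

theorem algebraicIndependent_av : AlgebraicIndependent F3 av := by
  have : Algebra.IsAlgebraic (Algebra.adjoin F3 (Set.range av)) S3 := by
    rw [adjoin_range_av]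
    infer_instance
  exact algebraicIndependent_of_isAlgebraic_adjoin

theorem w7_eq : w7 = relInvBasis F3 ∘ finSumFinEquiv.symm := by
  rw [Equiv.eq_comp_symm]
  funext i
  rcases i with i | i <;> fin_cases i
  · rfl
  · rfl
  · rfl
  · exact mul_comm _ _
  · change X 1 ^ 3 * X 2 = (X 1 ^ 2 * (X 1 * X 2) : S3)
    ring
  · exact mul_comm _ _

theorem linearIndependent_w7 : LinearIndependent (Algebra.adjoin F3 (Set.range av)) w7 := by
  rw [adjoin_range_av, w7_eq]
  exact linearIndependent_relInvBasis.comp _ finSumFinEquiv.symm.injective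

theorem mem_span_w7_iff {f : S3} :
    f ∈ Submodule.span (Algebra.adjoin F3 (Set.range av)) (Set.range w7) ↔ f ∈ relInv := by
  rw [adjoin_range_av, w7_eq, finSumFinEquiv.symm.surjective.range_comp, mem_span_relInvBasis_iff,
    mem_relInv_iff]

theorem Psi7_eq : Psi7 = Fintype.linearCombination (Algebra.adjoin F3 (Set.range av)) w7 ∘
    Equiv.piCongrRight fun _ => algebraicIndependent_av.aevalEquiv.toEquiv := by
  funext p
  simp only [Psi7, Function.comp_apply, Fintype.linearCombination_apply, Subalgebra.smul_def]
  rfl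

end Basis

/-- `S^H_χ` is a free `A`-module with basis `{x₁, x₂x₃, x₁³, x₁x₂², x₂³x₃, x₁³x₂²}`:
the map `(p₁,…,p₆) ↦ ∑ᵢ pᵢ(a₁,a₂,a₃)·wᵢ` is injective, and its image is exactly the
set of `χ`-relative `H`-invariants. -/
theorem stmt7 :
    Function.Injective Psi7 ∧
    Set.range Psi7 = {f : S3 | ∀ h ∈ H3, actS h f = chi h • f} := by
  rw [Psi7_eq]
  refine ⟨linearIndependent_w7.fintypeLinearCombination_injective.comp (Equiv.injective _), ?_⟩
  rw [EquivLike.range_comp, ← LinearMap.coe_range, Fintype.range_linearCombination]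
  exact Set.ext fun f => mem_span_w7_iff
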